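/- arXiv:1407.4236 — 4 statements merged into one kernel-verified Lean document; each statement's English description precedes it below -/
import Mathlib

section
/- Let n be a positive integer and let (f, f̃, α, β) be a Jacobi-Lie bialgebra in structure-constant form on ℝ^n. Let A be an invertible real n×n matrix which is an automorphism of the Lie algebra with structure constants f, i.e. A_i^m f_{mn}^k A_j^n = f_{ij}^l A_l^k for all i,j,k (summation over repeated indices). Define f̃'^{ij}_n = (A^{-T})^i_k f̃^{kl}_m (A^{-T})^j_l (A^T)^m_n, α'^i = (A^{-T})^i_m α^m, and β'_i = A_i^m β_m. Then (f, f̃', α', β') is again a Jacobi-Lie bialgebra in structure-constant form on ℝ^n. -/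
/-- A "Jacobi-Lie bialgebra in structure-constant form" on ℝ^n:
`f i j k` encodes the structure constants `f_{ij}^k` of the Lie algebra `g`
(so `[X_i, X_j] = f_{ij}^k X_k`), `ft i j k` encodes the structure constants
`f̃^{ij}_k` of the dual Lie algebra `g*` (so `[X̃^i, X̃^j] = f̃^{ij}_k X̃^k`),
and `a`, `b` are the coefficient vectors of the 1-cocycles
`X₀ = a^i X_i ∈ g` and `φ₀ = b_j X̃^j ∈ g*`. -/
def IsJacobiLieBialgebra (n : ℕ) (f ft : Fin n → Fin n → Fin n → ℝ)
    (a b : Fin n → ℝ) : Prop :=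
  -- antisymmetry of f
  (∀ i j k, f i j k = - f j i k) ∧
  -- Jacobi identity for f
  (∀ i j m p, (∑ k, f i j k * f k m p) + (∑ k, f i k p * f m j k)
      + (∑ k, f j k p * f i m k) = 0) ∧
  -- antisymmetry of ft
  (∀ i j k, ft i j k = - ft j i k) ∧
  -- Jacobi identity for ft
  (∀ i j m p, (∑ k, ft i j k * ft k m p) + (∑ k, ft i m k * ft j k p)
      + (∑ k, ft j m k * ft k i p) = 0) ∧
  -- compatibility condition (i)
  (∀ i j m p,
      (∑ k, f i j k * ft m p k) - (∑ k, f i k m * ft k p j)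
      - (∑ k, f i k p * ft m k j) - (∑ k, f k j m * ft k p i)
      - (∑ k, f k j p * ft m k i)
      + b i * ft m p j - b j * ft m p i + a m * f i j p - a p * f i j m
      + ((∑ k, a k * f i k m) - a m * b i) * (if j = p then (1 : ℝ) else 0)
      - ((∑ k, a k * f j k m) - a m * b j) * (if i = p then (1 : ℝ) else 0)
      - ((∑ k, a k * f i k p) - a p * b i) * (if j = m then (1 : ℝ) else 0)
      + ((∑ k, a k * f j k p) - a p * b j) * (if i = m then (1 : ℝ) else 0) = 0) ∧
  -- condition (ii): α^i β_i = 0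
  ((∑ i, a i * b i) = 0) ∧
  -- condition (iii): α^n f_{ni}^m − β_n f̃^{nm}_i = 0
  (∀ i m, (∑ k, a k * f k i m) - (∑ k, b k * ft k m i) = 0) ∧
  -- condition (iv): α^i f̃^{mn}_i = 0
  (∀ m p, (∑ i, a i * ft m p i) = 0) ∧
  -- condition (v): β_i f_{mn}^i = 0
  (∀ m p, (∑ i, b i * f m p i) = 0)

open Matrix

/-- The trilinear form whose components in the standard basis are `t i j k`. -/
def trilinearForm {n : ℕ} (t : Fin n → Fin n → Fin n → ℝ) (x y z : Fin n → ℝ) : ℝ :=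
  ∑ i, x i * ∑ j, y j * ∑ k, z k * t i j k

section Linearity

variable {n : ℕ} (t : Fin n → Fin n → Fin n → ℝ)

theorem trilinearForm_single (i j k : Fin n) :
    trilinearForm t (Pi.single i 1) (Pi.single j 1) (Pi.single k 1) = t i j k := by
  simp [trilinearForm, Pi.single_apply]

theorem isLinearMap_add_fun {φ ψ : (Fin n → ℝ) → ℝ} (hφ : IsLinearMap ℝ φ)
    (hψ : IsLinearMap ℝ ψ) : IsLinearMap ℝ fun x => φ x + ψ x :=
  (hφ.mk' φ + hψ.mk' ψ).isLinear

theorem isLinearMap_sub_fun {φ ψ : (Fin n → ℝ) → ℝ} (hφ : IsLinearMap ℝ φ)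
    (hψ : IsLinearMap ℝ ψ) : IsLinearMap ℝ fun x => φ x - ψ x :=
  (hφ.mk' φ - hψ.mk' ψ).isLinear

theorem isLinearMap_const_mul {φ : (Fin n → ℝ) → ℝ} (c : ℝ) (hφ : IsLinearMap ℝ φ) :
    IsLinearMap ℝ fun x => c * φ x :=
  (c • hφ.mk' φ).isLinear

theorem isLinearMap_mul_const {φ : (Fin n → ℝ) → ℝ} (c : ℝ) (hφ : IsLinearMap ℝ φ) :
    IsLinearMap ℝ fun x => φ x * c := by
  simpa only [mul_comm] using isLinearMap_const_mul c hφ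

theorem isLinearMap_sum_fun {ι : Type*} [Fintype ι] {φ : ι → (Fin n → ℝ) → ℝ}
    (hφ : ∀ k, IsLinearMap ℝ (φ k)) : IsLinearMap ℝ fun x => ∑ k, φ k x :=
  ⟨fun x y => by simp only [(hφ _).map_add, Finset.sum_add_distrib],
    fun c x => by simp only [(hφ _).map_smul, Finset.smul_sum]⟩

theorem isLinearMap_coord (i : Fin n) : IsLinearMap ℝ fun x : Fin n → ℝ => x i :=
  (LinearMap.proj (R := ℝ) (φ := fun _ : Fin n => ℝ) i).isLinear

theorem isLinearMap_dotProduct_right (v : Fin n → ℝ) : IsLinearMap ℝ fun x => v ⬝ᵥ x :=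
  ⟨fun x y => dotProduct_add v x y, fun c x => dotProduct_smul c v x⟩

theorem isLinearMap_dotProduct_left (v : Fin n → ℝ) : IsLinearMap ℝ fun x => x ⬝ᵥ v :=
  ⟨fun x y => add_dotProduct x y v, fun c x => smul_dotProduct c x v⟩

theorem isLinearMap_trilinearForm_fst (y z : Fin n → ℝ) :
    IsLinearMap ℝ fun x => trilinearForm t x y z :=
  isLinearMap_sum_fun fun i => isLinearMap_mul_const _ (isLinearMap_coord i)

theorem isLinearMap_trilinearForm_snd (x z : Fin n → ℝ) :
    IsLinearMap ℝ fun y => trilinearForm t x y z :=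
  isLinearMap_sum_fun fun _ => isLinearMap_const_mul _ <|
    isLinearMap_sum_fun fun j => isLinearMap_mul_const _ (isLinearMap_coord j)

theorem isLinearMap_trilinearForm_thd (x y : Fin n → ℝ) :
    IsLinearMap ℝ fun z => trilinearForm t x y z :=
  isLinearMap_sum_fun fun _ => isLinearMap_const_mul _ <|
    isLinearMap_sum_fun fun _ => isLinearMap_const_mul _ <|
      isLinearMap_sum_fun fun k => isLinearMap_mul_const _ (isLinearMap_coord k)

/-- A linear functional is determined by its values on the standard basis. -/
theorem IsLinearMap.apply_eq_sum_single {φ : (Fin n → ℝ) → ℝ} (hφ : IsLinearMap ℝ φ)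
    (x : Fin n → ℝ) : φ x = ∑ i, x i * φ (Pi.single i 1) := by
  simpa using congrArg (hφ.mk' φ) (pi_eq_sum_univ' x)

theorem bilinear_eq_zero {φ : (Fin n → ℝ) → (Fin n → ℝ) → ℝ}
    (h₁ : ∀ y, IsLinearMap ℝ fun x => φ x y) (h₂ : ∀ x, IsLinearMap ℝ fun y => φ x y)
    (h : ∀ i j, φ (Pi.single i 1) (Pi.single j 1) = 0) (x y : Fin n → ℝ) : φ x y = 0 := by
  rw [(h₁ y).apply_eq_sum_single]
  refine Finset.sum_eq_zero fun i _ => ?_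
  rw [(h₂ _).apply_eq_sum_single]
  simp [h]

theorem quadrilinear_eq_zero
    {φ : (Fin n → ℝ) → (Fin n → ℝ) → (Fin n → ℝ) → (Fin n → ℝ) → ℝ}
    (h₁ : ∀ y z w, IsLinearMap ℝ fun x => φ x y z w)
    (h₂ : ∀ x z w, IsLinearMap ℝ fun y => φ x y z w)
    (h₃ : ∀ x y w, IsLinearMap ℝ fun z => φ x y z w)
    (h₄ : ∀ x y z, IsLinearMap ℝ fun w => φ x y z w)
    (h : ∀ i j k l, φ (Pi.single i 1) (Pi.single j 1) (Pi.single k 1) (Pi.single l 1) = 0)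
    (x y z w : Fin n → ℝ) : φ x y z w = 0 :=
  bilinear_eq_zero (φ := fun x y => φ x y z w) (fun y => h₁ y z w) (fun x => h₂ x z w)
    (fun i j => bilinear_eq_zero (φ := fun z w => φ (Pi.single i 1) (Pi.single j 1) z w)
      (h₃ _ _) (h₄ _ _) (h i j) z w) x y

/-- The contraction of two linear functionals can be computed in any pair of dual frames. -/
theorem sum_mul_frame_eq_sum_mul_single {r c : Fin n → Fin n → ℝ}
    (h : ∀ i j, ∑ k, c k i * r k j = if i = j then 1 else 0)
    {φ ψ : (Fin n → ℝ) → ℝ} (hφ : IsLinearMap ℝ φ) (hψ : IsLinearMap ℝ ψ) :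
    ∑ k, φ (c k) * ψ (r k) = ∑ k, φ (Pi.single k 1) * ψ (Pi.single k 1) := by
  calc ∑ k, φ (c k) * ψ (r k)
      = ∑ k, ∑ i, ∑ j, (c k i * r k j) * (φ (Pi.single i 1) * ψ (Pi.single j 1)) := by
        refine Finset.sum_congr rfl fun k _ => ?_
        rw [hφ.apply_eq_sum_single, hψ.apply_eq_sum_single, Finset.sum_mul_sum]
        exact Finset.sum_congr rfl fun i _ => Finset.sum_congr rfl fun j _ => by ring
    _ = ∑ i, ∑ j, (∑ k, c k i * r k j) * (φ (Pi.single i 1) * ψ (Pi.single j 1)) := by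
        rw [Finset.sum_comm]
        refine Finset.sum_congr rfl fun i _ => ?_
        rw [Finset.sum_comm]
        simp only [Finset.sum_mul]
    _ = ∑ k, φ (Pi.single k 1) * ψ (Pi.single k 1) := by simp [h]

end Linearity

/-- The components of a Jacobi-Lie bialgebra with respect to a frame `r` and its dual frame `c`
again form a Jacobi-Lie bialgebra. -/
theorem IsJacobiLieBialgebra.frame {n : ℕ} {f ft : Fin n → Fin n → Fin n → ℝ} {a b : Fin n → ℝ}
    (hJ : IsJacobiLieBialgebra n f ft a b) {r c : Fin n → Fin n → ℝ}
    (hcr : ∀ i j, ∑ k, c k i * r k j = if i = j then 1 else 0)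
    (hrc : ∀ i j, r i ⬝ᵥ c j = if i = j then 1 else 0) :
    IsJacobiLieBialgebra n (fun i j k => trilinearForm f (r i) (r j) (c k))
      (fun i j k => trilinearForm ft (c i) (c j) (r k))
      (fun i => c i ⬝ᵥ a) (fun i => r i ⬝ᵥ b) := by
  obtain ⟨f_antisymm, f_jacobi, ft_antisymm, ft_jacobi, compat, ab, af_bft, aft, bf⟩ := hJ
  have hrc' : ∀ i j, ∑ k, r k i * c k j = if i = j then 1 else 0 := fun i j => by
    simpa only [mul_comm, eq_comm] using hcr j i
  have antisymm : ∀ t : Fin n → Fin n → Fin n → ℝ, (∀ i j k, t i j k = -t j i k) →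
      ∀ x y z, trilinearForm t x y z = -trilinearForm t y x z := by
    intro t ht x y z
    simp only [trilinearForm, Finset.mul_sum, ← Finset.sum_neg_distrib]
    rw [Finset.sum_comm]
    refine Finset.sum_congr rfl fun j _ => Finset.sum_congr rfl fun i _ =>
      Finset.sum_congr rfl fun k _ => ?_
    rw [ht]
    ring
  have contract {φ ψ : (Fin n → ℝ) → ℝ} (hφ : IsLinearMap ℝ φ) (hψ : IsLinearMap ℝ ψ) :=
    sum_mul_frame_eq_sum_mul_single hcr hφ hψ
  have contract' {φ ψ : (Fin n → ℝ) → ℝ} (hφ : IsLinearMap ℝ φ) (hψ : IsLinearMap ℝ ψ) :=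
    sum_mul_frame_eq_sum_mul_single hrc' hφ hψ
  obtain ⟨f_jacobi_form, ft_jacobi_form, compat_form, af_bft_form, aft_form, bf_form⟩ :
      (∀ x y z w : Fin n → ℝ,
        (∑ k, trilinearForm f x y (Pi.single k 1) * trilinearForm f (Pi.single k 1) z w)
        + (∑ k, trilinearForm f x (Pi.single k 1) w * trilinearForm f z y (Pi.single k 1))
        + (∑ k, trilinearForm f y (Pi.single k 1) w * trilinearForm f x z (Pi.single k 1)) = 0) ∧
      (∀ x y z w : Fin n → ℝ,
        (∑ k, trilinearForm ft x y (Pi.single k 1) * trilinearForm ft (Pi.single k 1) z w)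
        + (∑ k, trilinearForm ft x z (Pi.single k 1) * trilinearForm ft y (Pi.single k 1) w)
        + (∑ k, trilinearForm ft y z (Pi.single k 1) * trilinearForm ft (Pi.single k 1) x w) = 0) ∧
      (∀ x y z w : Fin n → ℝ,
        (∑ k, trilinearForm f x y (Pi.single k 1) * trilinearForm ft z w (Pi.single k 1))
        - (∑ k, trilinearForm f x (Pi.single k 1) z * trilinearForm ft (Pi.single k 1) w y)
        - (∑ k, trilinearForm f x (Pi.single k 1) w * trilinearForm ft z (Pi.single k 1) y)
        - (∑ k, trilinearForm f (Pi.single k 1) y z * trilinearForm ft (Pi.single k 1) w x)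
        - (∑ k, trilinearForm f (Pi.single k 1) y w * trilinearForm ft z (Pi.single k 1) x)
        + (x ⬝ᵥ b) * trilinearForm ft z w y - (y ⬝ᵥ b) * trilinearForm ft z w x
        + (z ⬝ᵥ a) * trilinearForm f x y w - (w ⬝ᵥ a) * trilinearForm f x y z
        + ((∑ k, (Pi.single k 1 ⬝ᵥ a) * trilinearForm f x (Pi.single k 1) z)
          - (z ⬝ᵥ a) * (x ⬝ᵥ b)) * (y ⬝ᵥ w)
        - ((∑ k, (Pi.single k 1 ⬝ᵥ a) * trilinearForm f y (Pi.single k 1) z)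
          - (z ⬝ᵥ a) * (y ⬝ᵥ b)) * (x ⬝ᵥ w)
        - ((∑ k, (Pi.single k 1 ⬝ᵥ a) * trilinearForm f x (Pi.single k 1) w)
          - (w ⬝ᵥ a) * (x ⬝ᵥ b)) * (y ⬝ᵥ z)
        + ((∑ k, (Pi.single k 1 ⬝ᵥ a) * trilinearForm f y (Pi.single k 1) w)
          - (w ⬝ᵥ a) * (y ⬝ᵥ b)) * (x ⬝ᵥ z) = 0) ∧
      (∀ x z : Fin n → ℝ,
        (∑ k, (Pi.single k 1 ⬝ᵥ a) * trilinearForm f (Pi.single k 1) x z)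
        - (∑ k, (Pi.single k 1 ⬝ᵥ b) * trilinearForm ft (Pi.single k 1) z x) = 0) ∧
      (∀ z w : Fin n → ℝ,
        (∑ k, (Pi.single k 1 ⬝ᵥ a) * trilinearForm ft z w (Pi.single k 1)) = 0) ∧
      (∀ x y : Fin n → ℝ,
        (∑ k, (Pi.single k 1 ⬝ᵥ b) * trilinearForm f x y (Pi.single k 1)) = 0) := by
    refine ⟨quadrilinear_eq_zero ?_ ?_ ?_ ?_ ?f_jacobi,
      quadrilinear_eq_zero ?_ ?_ ?_ ?_ ?ft_jacobi,
      quadrilinear_eq_zero ?_ ?_ ?_ ?_ ?compat,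
      bilinear_eq_zero ?_ ?_ ?af_bft,
      bilinear_eq_zero ?_ ?_ ?aft,
      bilinear_eq_zero ?_ ?_ ?bf⟩
    case f_jacobi => simpa [trilinearForm_single] using f_jacobi
    case ft_jacobi => simpa [trilinearForm_single] using ft_jacobi
    case compat => simpa [trilinearForm_single, Pi.single_apply, eq_comm] using compat
    case af_bft => simpa [trilinearForm_single] using af_bft
    case aft => simpa [trilinearForm_single] using aft
    case bf => simpa [trilinearForm_single] using bf
    all_goals
      intros
      repeat' with_reducible first
        | exact isLinearMap_dotProduct_left _
        | exact isLinearMap_dotProduct_right _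
        | exact isLinearMap_trilinearForm_fst _ _ _
        | exact isLinearMap_trilinearForm_snd _ _ _
        | exact isLinearMap_trilinearForm_thd _ _ _
        | apply isLinearMap_add_fun
        | apply isLinearMap_sub_fun
        | apply isLinearMap_mul_const
        | apply isLinearMap_const_mul
        | refine isLinearMap_sum_fun fun _ => ?_
  refine ⟨fun _ _ _ => antisymm f f_antisymm _ _ _, ?_, fun _ _ _ => antisymm ft ft_antisymm _ _ _,
    ?_, ?_, ?_, ?_, ?_, ?_⟩
  · intro i j m p
    simp only [contract (isLinearMap_trilinearForm_thd _ _ _) (isLinearMap_trilinearForm_fst _ _ _),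
      contract' (isLinearMap_trilinearForm_snd _ _ _) (isLinearMap_trilinearForm_thd _ _ _)]
    exact f_jacobi_form _ _ _ _
  · intro i j m p
    simp only [contract' (isLinearMap_trilinearForm_thd _ _ _) (isLinearMap_trilinearForm_fst _ _ _),
      contract' (isLinearMap_trilinearForm_thd _ _ _) (isLinearMap_trilinearForm_snd _ _ _)]
    exact ft_jacobi_form _ _ _ _
  · intro i j m p
    simp only [← hrc,
      contract (isLinearMap_trilinearForm_thd _ _ _) (isLinearMap_trilinearForm_thd _ _ _),
      contract' (isLinearMap_trilinearForm_snd _ _ _) (isLinearMap_trilinearForm_fst _ _ _),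
      contract' (isLinearMap_trilinearForm_snd _ _ _) (isLinearMap_trilinearForm_snd _ _ _),
      contract' (isLinearMap_trilinearForm_fst _ _ _) (isLinearMap_trilinearForm_fst _ _ _),
      contract' (isLinearMap_trilinearForm_fst _ _ _) (isLinearMap_trilinearForm_snd _ _ _),
      contract (isLinearMap_dotProduct_left _) (isLinearMap_trilinearForm_snd _ _ _)]
    exact compat_form _ _ _ _
  · rw [contract (isLinearMap_dotProduct_left _) (isLinearMap_dotProduct_left _)]
    simpa using ab
  · intro i m
    simp only [contract (isLinearMap_dotProduct_left _) (isLinearMap_trilinearForm_fst _ _ _),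
      contract' (isLinearMap_dotProduct_left _) (isLinearMap_trilinearForm_fst _ _ _)]
    exact af_bft_form _ _
  · intro m p
    simp only [contract (isLinearMap_dotProduct_left _) (isLinearMap_trilinearForm_thd _ _ _)]
    exact aft_form _ _
  · intro m p
    simp only [contract' (isLinearMap_dotProduct_left _) (isLinearMap_trilinearForm_thd _ _ _)]
    exact bf_form _ _

/-- transporting a Jacobi-Lie bialgebra along an automorphism `A` of `g`
(with `f̃'ⁱʲ_n = (A⁻ᵀ)ⁱ_k f̃ᵏˡ_m (A⁻ᵀ)ʲ_l (Aᵀ)ᵐ_n`, `α'ⁱ = (A⁻ᵀ)ⁱ_m αᵐ`, `β'_i = A_iᵐ β_m`)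
again yields a Jacobi-Lie bialgebra. -/
theorem stmt0 (n : ℕ) (hn : 0 < n) (f ft : Fin n → Fin n → Fin n → ℝ)
    (α β : Fin n → ℝ)
    (hJ : IsJacobiLieBialgebra n f ft α β)
    (A : Matrix (Fin n) (Fin n) ℝ) (hA : IsUnit A.det)
    (hAut : ∀ i j k, (∑ m, ∑ p, A i m * f m p k * A j p) = ∑ l, f i j l * A l k) :
    IsJacobiLieBialgebra n f
      (fun i j q => ∑ k, ∑ l, ∑ m, (A⁻¹).transpose i k * ft k l m * (A⁻¹).transpose j l * A.transpose m q)
      (fun i => ∑ m, (A⁻¹).transpose i m * α m)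
      (fun i => ∑ m, A i m * β m) := by
  have hAB : A * A⁻¹ = 1 := mul_nonsing_inv A hA
  have hBA : A⁻¹ * A = 1 := nonsing_inv_mul A hA
  have hcr : ∀ i j, ∑ k, A⁻¹ᵀ k i * A k j = if i = j then 1 else 0 := fun i j => by
    simpa only [mul_apply, one_apply, transpose_apply] using congrFun (congrFun hBA i) j
  have hrc : ∀ i j, A i ⬝ᵥ A⁻¹ᵀ j = if i = j then 1 else 0 := fun i j => by
    simpa only [mul_apply, one_apply, dotProduct, transpose_apply] using
      congrFun (congrFun hAB i) j
  have f_frame : (fun i j k => trilinearForm f (A i) (A j) (A⁻¹ᵀ k)) = f := by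
    funext i j k
    calc trilinearForm f (A i) (A j) (A⁻¹ᵀ k)
        = ∑ q, A⁻¹ᵀ k q * ∑ m, ∑ p, A i m * f m p q * A j p := by
          simp only [trilinearForm, Finset.mul_sum]
          rw [Finset.sum_comm_cycle]
          refine Finset.sum_congr rfl fun q _ => Finset.sum_congr rfl fun m _ =>
            Finset.sum_congr rfl fun p _ => ?_
          ring
      _ = ∑ l, f i j l * ∑ q, A l q * A⁻¹ᵀ k q := by
          simp only [hAut, Finset.mul_sum]
          rw [Finset.sum_comm]
          refine Finset.sum_congr rfl fun l _ => Finset.sum_congr rfl fun q _ => ?_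
          ring
      _ = f i j k := by
          simp only [dotProduct] at hrc
          simp [hrc, -transpose_apply]
  convert hJ.frame hcr hrc using 1
  · exact f_frame.symm
  · funext i j q
    simp only [trilinearForm, Finset.mul_sum]
    refine Finset.sum_congr rfl fun k _ => Finset.sum_congr rfl fun l _ =>
      Finset.sum_congr rfl fun m _ => ?_
    rw [transpose_apply A]
    ring
  · rfl
  · rfl
end

section
/- Let n be a positive integer and let (f, f̃, α, β) be a Jacobi-Lie bialgebra in structure-constant form on ℝ^n. Then the dual quadruple (f̃, f, β, α) — obtained by interchanging the roles of the two Lie algebras, i.e. taking f̃^{ij}_k as the structure constants of the first Lie algebra, f_{ij}^k as those of the second, β as the new α-vector and α as the new β-vector — is also a Jacobi-Lie bialgebra in structure-constant form on ℝ^n. -/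
/-- the dual of a Jacobi-Lie bialgebra, interchanging the two Lie algebras
and the two 1-cocycles, is again a Jacobi-Lie bialgebra. -/
theorem stmt1 (n : ℕ) (hn : 0 < n) (f ft : Fin n → Fin n → Fin n → ℝ)
    (α β : Fin n → ℝ)
    (hJ : IsJacobiLieBialgebra n f ft α β) :
    IsJacobiLieBialgebra n ft f β α := by
  obtain ⟨hf, hfJ, hft, hftJ, hc, hab, hiii, hiv, hv⟩ := hJ
  have contraction (i m : Fin n) : ∑ k, β k * ft i k m = ∑ k, α k * f m k i := by
    have h := hiii m i
    have h₁ : ∑ k, α k * f m k i = -∑ k, α k * f k m i := by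
      rw [← Finset.sum_neg_distrib]
      exact Finset.sum_congr rfl fun k _ => by rw [hf m k]; ring
    have h₂ : ∑ k, β k * ft i k m = -∑ k, β k * ft k i m := by
      rw [← Finset.sum_neg_distrib]
      exact Finset.sum_congr rfl fun k _ => by rw [hft i k]; ring
    linarith
  refine ⟨hft, fun i j m p => ?_, hf, fun i j m p => ?_, fun i j m p => ?_, ?_,
    fun i m => ?_, hv, hiv⟩
  · rw [← hftJ i j m p]
    have h₁ : ∑ k, ft i k p * ft m j k = ∑ k, ft j m k * ft k i p :=
      Finset.sum_congr rfl fun k _ => by rw [hft i k, hft m j]; ring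
    have h₂ : ∑ k, ft j k p * ft i m k = ∑ k, ft i m k * ft j k p :=
      Finset.sum_congr rfl fun k _ => mul_comm _ _
    rw [h₁, h₂]
    ring
  · rw [← hfJ i j m p]
    have h₁ : ∑ k, f j m k * f k i p = ∑ k, f i k p * f m j k :=
      Finset.sum_congr rfl fun k _ => by rw [hf i k, hf m j]; ring
    have h₂ : ∑ k, f i m k * f j k p = ∑ k, f j k p * f i m k :=
      Finset.sum_congr rfl fun k _ => mul_comm _ _
    rw [h₁, h₂]
    ring
  · have h := hc m p i j
    simp only [eq_comm (a := p), eq_comm (a := m)] at h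
    simp only [contraction, mul_comm (ft _ _ _) (f _ _ _)]
    linear_combination h
  · simpa only [mul_comm] using hab
  · rw [← neg_sub, hiii m i, neg_zero]
end

section
/- Let g be the 3-dimensional Bianchi Lie algebra III with basis X₁, X₂, X₃ and brackets [X₁,X₂] = −(X₂+X₃), [X₁,X₃] = −(X₂+X₃). For every real number a ≠ 0, let g* be the Lie algebra III.i with dual basis X̃¹, X̃², X̃³ and single nonzero bracket [X̃²,X̃³] = −((a+2)/a)(X̃²+X̃³). With X₀ = −(X₂−X₃) (i.e. α = (0,−1,1)) and φ₀ = a X̃¹ (i.e. β = (a,0,0)), the quadruple of corresponding structure constants and vectors (f, f̃, α, β) is a Jacobi-Lie bialgebra in structure-constant form on ℝ³. -/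
/-- the Jacobi-Lie bialgebra `((III, a X̃¹), (III.i, −(X₂−X₃)))` for `a ≠ 0`. -/
theorem stmt8 (a : ℝ) (ha : a ≠ 0) :
    IsJacobiLieBialgebra 3
      (![![![0, 0, 0], ![0, -1, -1], ![0, -1, -1]], ![![0, 1, 1], ![0, 0, 0], ![0, 0, 0]], ![![0, 1, 1], ![0, 0, 0], ![0, 0, 0]]] : Fin 3 → Fin 3 → Fin 3 → ℝ)
      (![![![0, 0, 0], ![0, 0, 0], ![0, 0, 0]], ![![0, 0, 0], ![0, 0, 0], ![0, -((a + 2) / a), -((a + 2) / a)]], ![![0, 0, 0], ![0, (a + 2) / a, (a + 2) / a], ![0, 0, 0]]] : Fin 3 → Fin 3 → Fin 3 → ℝ)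
      ![0, -1, 1] ![a, 0, 0] := by
  have hc : a * ((a + 2) / a) = a + 2 := mul_div_cancel₀ _ ha
  generalize (a + 2) / a = c at hc ⊢
  refine ⟨?_, ?_, ?_, ?_, ?_, ?_, ?_, ?_, ?_⟩
  all_goals simp only [Fin.forall_fin_succ, Fin.sum_univ_three]
  all_goals simp
  all_goals grind
end

section
/- Let a, b be real numbers with a > 0, a ≠ 1, b > 0, b ≠ 1. Let g be the 3-dimensional Bianchi Lie algebra VI_a with basis X₁, X₂, X₃ and brackets [X₁,X₂] = −(aX₂+X₃), [X₁,X₃] = −(X₂+aX₃), and let g* be the Lie algebra VI_b.v with dual basis X̃¹, X̃², X̃³ and brackets [X̃¹,X̃²] = X̃¹, [X̃¹,X̃³] = X̃¹, [X̃²,X̃³] = ((b+1)/(b−1))(X̃²−X̃³). With X₀ = −(X₂+X₃) (i.e. α = (0,−1,−1)) and φ₀ = −(a+1)X̃¹ (i.e. β = (−(a+1),0,0)), the quadruple of corresponding structure constants and vectors (f, f̃, α, β) is a Jacobi-Lie bialgebra in structure-constant form on ℝ³. -/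
set_option maxHeartbeats 4000000 in
/-- the Jacobi-Lie bialgebra `((VI_a, −(a+1)X̃¹), (VI_b.v, −(X₂+X₃)))`
for `a > 0`, `a ≠ 1`, `b > 0`, `b ≠ 1`. -/
theorem stmt15 (a b : ℝ) (ha : 0 < a) (ha1 : a ≠ 1) (hb : 0 < b) (hb1 : b ≠ 1) :
    IsJacobiLieBialgebra 3
      (![![![0, 0, 0], ![0, -a, -1], ![0, -1, -a]], ![![0, a, 1], ![0, 0, 0], ![0, 0, 0]], ![![0, 1, a], ![0, 0, 0], ![0, 0, 0]]] : Fin 3 → Fin 3 → Fin 3 → ℝ)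
      (![![![0, 0, 0], ![1, 0, 0], ![1, 0, 0]], ![![-1, 0, 0], ![0, 0, 0], ![0, (b + 1) / (b - 1), -((b + 1) / (b - 1))]], ![![-1, 0, 0], ![0, -((b + 1) / (b - 1)), (b + 1) / (b - 1)], ![0, 0, 0]]] : Fin 3 → Fin 3 → Fin 3 → ℝ)
      ![0, -1, -1] ![-(a + 1), 0, 0] := by
  generalize (b + 1) / (b - 1) = c
  refine ⟨?_, ?_, ?_, ?_, ?_, ?_, ?_, ?_, ?_⟩
  · intro i j k
    fin_cases i <;> fin_cases j <;> fin_cases k <;> simp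
  · intro i j m p
    fin_cases i <;> fin_cases j <;> fin_cases m <;> fin_cases p <;>
      simp [Fin.sum_univ_three] <;> ring
  · intro i j k
    fin_cases i <;> fin_cases j <;> fin_cases k <;> simp
  · intro i j m p
    fin_cases i <;> fin_cases j <;> fin_cases m <;> fin_cases p <;>
      simp [Fin.sum_univ_three]
  · intro i j m p
    fin_cases i <;> fin_cases j <;> fin_cases m <;> fin_cases p <;>
      simp [Fin.sum_univ_three] <;> ring
  · simp [Fin.sum_univ_three]
  · intro i m
    fin_cases i <;> fin_cases m <;> simp [Fin.sum_univ_three] <;> ring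
  · intro m p
    fin_cases m <;> fin_cases p <;> simp [Fin.sum_univ_three]
  · intro m p
    fin_cases m <;> fin_cases p <;> simp [Fin.sum_univ_three]
end
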